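/- Explicit energy bound for the recovery sequence of the constant function under the exact volume constraint: Let L > 0, σ ∈ (0,1), and let (k_n) be integers with 0 ≤ k_n ≤ ⌊Ln²⌋ and k_n/(Ln²) → σ. Then there exists N such that for every n ≥ N there is u_n ∈ A_n(L,k_n) with F_n^L(u_n) ≤ (2·⌊Ln⌋ + 3)/n. -/

import Mathlib

open MeasureTheory Filter Set
open scoped Classical

noncomputable section

/-- `AdmDisc L n k u` : `u` belongs to `A_n(L,k)`, i.e. `u` takes the values `0,1` on
`{1,…,⌊Ln²⌋}` and exactly `k` of those indices carry the value `1`. -/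
def AdmDisc (L : ℝ) (n k : ℕ) (u : ℕ → ℝ) : Prop :=
  (∀ i ∈ Finset.Icc 1 (Nat.floor (L * (n : ℝ) ^ 2)), u i = 0 ∨ u i = 1) ∧
  ((Finset.Icc 1 (Nat.floor (L * (n : ℝ) ^ 2))).filter fun i => u i = 1).card = k

/-- The discrete energy `F_n^L(u) = (1/n)·Σ (u_i − u_j)²`, the sum running over the
(unordered) pairs `{i,j} ⊆ {1,…,⌊Ln²⌋}` with `|i−j| = 1` or `|i−j| = n`. -/
def energyL (L : ℝ) (n : ℕ) (u : ℕ → ℝ) : ℝ :=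
  (1 / (n : ℝ)) *
    ∑ p ∈ (Finset.Icc 1 (Nat.floor (L * (n : ℝ) ^ 2)) ×ˢ
        Finset.Icc 1 (Nat.floor (L * (n : ℝ) ^ 2))).filter
        (fun p => p.1 < p.2 ∧ (p.2 - p.1 = 1 ∨ p.2 - p.1 = n)),
      (u p.1 - u p.2) ^ 2

/-- first `c` columns, plus the first `t` cells of column `c` -/
def colP (n c t i : ℕ) : Prop := (i - 1) % n < c ∨ ((i - 1) % n = c ∧ (i - 1) / n < t)

lemma colP_iff (n c t q s : ℕ) (hs : s < n) :
    colP n c t (q * n + s + 1) ↔ (s < c ∨ (s = c ∧ q < t)) := by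
  have h1 : (q * n + s) % n = s := by
    rw [add_comm, Nat.add_mul_mod_self_right, Nat.mod_eq_of_lt hs]
  have h2 : (q * n + s) / n = q := by
    rw [add_comm, Nat.add_mul_div_right _ _ (by omega), Nat.div_eq_of_lt hs, zero_add]
  simp [colP, h1, h2]

lemma cell (n : ℕ) (hn : 0 < n) (i : ℕ) (hi : 1 ≤ i) : ∃ q s, s < n ∧ i = q * n + s + 1 := by
  refine ⟨(i-1)/n, (i-1)%n, Nat.mod_lt _ hn, ?_⟩
  have := Nat.div_add_mod (i-1) n
  rw [mul_comm] at this
  omega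

lemma cell_inj (n q s q' s' : ℕ) (hs : s < n) (hs' : s' < n)
    (h : q * n + s = q' * n + s') : q = q' ∧ s = s' := by
  have a := congrArg (· % n) h
  have b := congrArg (· / n) h
  have hn : 0 < n := by omega
  simp only [add_comm _ s, add_comm _ s', Nat.add_mul_mod_self_right, Nat.mod_eq_of_lt hs,
    Nat.mod_eq_of_lt hs', Nat.add_mul_div_right _ _ hn, Nat.div_eq_of_lt hs,
    Nat.div_eq_of_lt hs', zero_add] at a b
  exact ⟨b, a⟩

lemma step_card (n M c t : ℕ) (hc : c < n) (hM : t * n + c + 1 ≤ M) :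
    ((Finset.Icc 1 M).filter (colP n c (t+1))).card
      = ((Finset.Icc 1 M).filter (colP n c t)).card + 1 := by
  have hn : 0 < n := by omega
  have : (Finset.Icc 1 M).filter (colP n c (t+1))
      = insert (t * n + c + 1) ((Finset.Icc 1 M).filter (colP n c t)) := by
    ext i
    simp only [Finset.mem_filter, Finset.mem_insert, Finset.mem_Icc]
    constructor
    · rintro ⟨⟨h1, h2⟩, h⟩
      obtain ⟨q, s, hs, rfl⟩ := cell n hn i h1
      rw [colP_iff _ _ _ _ _ hs] at h ⊢
      by_cases e : s = c ∧ q = t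
      · left; rw [e.1, e.2]
      · right; exact ⟨⟨h1, h2⟩, by omega⟩
    · rintro (rfl | ⟨⟨h1, h2⟩, h⟩)
      · refine ⟨⟨by omega, hM⟩, ?_⟩
        rw [colP_iff _ _ _ _ _ hc]; omega
      · obtain ⟨q, s, hs, rfl⟩ := cell n hn i h1
        rw [colP_iff _ _ _ _ _ hs] at h ⊢
        exact ⟨⟨h1, h2⟩, by omega⟩
  rw [this, Finset.card_insert_of_notMem]
  simp only [Finset.mem_filter, not_and]
  intro _
  rw [colP_iff _ _ _ _ _ hc]; omega

lemma exists_ct (n M : ℕ) (hn : 0 < n) (k : ℕ) (hk : k ≤ M) :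
    ∃ c t, c < n ∧ ((Finset.Icc 1 M).filter (colP n c t)).card = k := by
  induction k with
  | zero =>
    refine ⟨0, 0, hn, ?_⟩
    rw [Finset.card_eq_zero, Finset.filter_eq_empty_iff]
    intro i _
    simp [colP]
  | succ k ih =>
    obtain ⟨c, t, hc, h⟩ := ih (by omega)
    by_cases h1 : t * n + c + 1 ≤ M
    · exact ⟨c, t+1, hc, by rw [step_card n M c t hc h1, h]⟩
    · -- column `c` is full
      have hfull : ∀ q s, s < n → q * n + s + 1 ≤ M → s ≤ c →
          colP n c t (q * n + s + 1) := by
        intro q s hs hq hsc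
        rw [colP_iff _ _ _ _ _ hs]
        by_contra hcon
        have hsc' : s = c := by omega
        have : t ≤ q := by omega
        have := Nat.mul_le_mul_right n this
        omega
      by_cases h2 : c + 1 < n ∧ c + 2 ≤ M
      · refine ⟨c+1, 1, h2.1, ?_⟩
        rw [step_card n M (c+1) 0 h2.1 (by omega), ← h]
        congr 2
        apply Finset.filter_congr
        intro i hi
        rw [Finset.mem_Icc] at hi
        obtain ⟨q, s, hs, rfl⟩ := cell n hn i hi.1
        constructor
        · intro h
          rw [colP_iff _ _ _ _ _ hs] at h
          exact hfull q s hs hi.2 (by omega)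
        · intro h
          rw [colP_iff _ _ _ _ _ hs] at h ⊢
          omega
      · exfalso
        rw [Finset.filter_true_of_mem] at h
        · simp at h; omega
        · intro i hi
          rw [Finset.mem_Icc] at hi
          obtain ⟨q, s, hs, rfl⟩ := cell n hn i hi.1
          exact hfull q s hs hi.2 (by have := Nat.zero_le (q*n); omega)

lemma bad_card (n M R c t : ℕ) (hn : 0 < n) (hMR : M < (R + 1) * n) :
    (((Finset.Icc 1 M ×ˢ Finset.Icc 1 M).filter
        (fun p => p.1 < p.2 ∧ (p.2 - p.1 = 1 ∨ p.2 - p.1 = n))).filter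
        (fun p : ℕ × ℕ => ¬ (colP n c t p.1 ↔ colP n c t p.2))).card ≤ 2 * R + 2 := by
  let B : Finset (ℕ × ℕ) :=
    (((Finset.range R).image (fun q => ((q + 1) * n, (q + 1) * n + 1))) ∪
      ((Finset.range (R + 1)).image
        (fun q => (q * n + c + (if q < t then 1 else 0),
          q * n + c + (if q < t then 1 else 0) + 1)))) ∪ {((t - 1) * n + c + 1, t * n + c + 1)}
  have hB : B.card ≤ 2 * R + 2 := by
    have h1 := Finset.card_image_le (s := Finset.range R)
      (f := fun q => ((q + 1) * n, (q + 1) * n + 1))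
    have h2 := Finset.card_image_le (s := Finset.range (R + 1))
      (f := fun q => (q * n + c + (if q < t then 1 else 0),
          q * n + c + (if q < t then 1 else 0) + 1))
    have h3 := Finset.card_union_le
      ((Finset.range R).image (fun q => ((q + 1) * n, (q + 1) * n + 1)))
      ((Finset.range (R + 1)).image
        (fun q => (q * n + c + (if q < t then 1 else 0),
          q * n + c + (if q < t then 1 else 0) + 1)))
    have h4 := Finset.card_union_le
      (((Finset.range R).image (fun q => ((q + 1) * n, (q + 1) * n + 1))) ∪
      ((Finset.range (R + 1)).image
        (fun q => (q * n + c + (if q < t then 1 else 0),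
          q * n + c + (if q < t then 1 else 0) + 1)))) {((t - 1) * n + c + 1, t * n + c + 1)}
    rw [Finset.card_range] at h1 h2
    rw [Finset.card_singleton] at h4
    show Finset.card (_ ∪ _) ≤ _
    omega
  refine le_trans (Finset.card_le_card ?_) hB
  rintro ⟨i, j⟩ hp
  simp only [Finset.mem_filter, Finset.mem_product, Finset.mem_Icc] at hp
  obtain ⟨⟨⟨⟨hi1, hi2⟩, hj1, hj2⟩, hij, hd⟩, hbad⟩ := hp
  obtain ⟨q, s, hs, rfl⟩ := cell n hn i hi1
  simp only [B, Finset.mem_union, Finset.mem_image, Finset.mem_range, Finset.mem_singleton,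
    Prod.mk.injEq]
  by_cases hd1 : j - (q * n + s + 1) = 1
  · left
    obtain rfl : j = q * n + s + 1 + 1 := by omega
    by_cases hw : s + 1 = n
    · left
      refine ⟨q, ?_, ?_⟩
      · by_contra hcon
        have : R + 1 ≤ q + 1 := by omega
        have := Nat.mul_le_mul_right n this
        rw [add_mul q] at this
        omega
      · rw [add_mul]; omega
    · right
      have e := colP_iff n c t q (s+1) (by omega)
      rw [← add_assoc] at e
      rw [e, colP_iff _ _ _ _ _ hs] at hbad
      refine ⟨q, ?_, ?_⟩
      · by_contra hcon
        have : R + 1 ≤ q := by omega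
        have := Nat.mul_le_mul_right n this
        omega
      · split_ifs <;> omega
  · right
    have hd2 : j - (q * n + s + 1) = n := by omega
    obtain rfl : j = (q + 1) * n + s + 1 := by rw [add_mul]; omega
    rw [colP_iff _ _ _ _ _ hs, colP_iff _ _ _ _ _ hs] at hbad
    obtain rfl : s = c := by omega
    obtain rfl : t = q + 1 := by omega
    simp

/-- Explicit energy bound for the recovery sequence of the constant function under the
exact volume constraint: for `n` large there is `u_n ∈ A_n(L,k_n)` with
`F_n^L(u_n) ≤ (2⌊Ln⌋+3)/n`. -/
theorem recovery_energy_bound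
    (L σ : ℝ) (hL : 0 < L) (hσ : σ ∈ Set.Ioo (0 : ℝ) 1)
    (k : ℕ → ℕ) (hk : ∀ n, k n ≤ Nat.floor (L * (n : ℝ) ^ 2))
    (hklim : Tendsto (fun n => (k n : ℝ) / (L * (n : ℝ) ^ 2)) atTop (nhds σ)) :
    ∃ N : ℕ, ∀ n, N ≤ n → ∃ u : ℕ → ℝ, AdmDisc L n (k n) u ∧
      energyL L n u ≤ (2 * (Nat.floor (L * (n : ℝ)) : ℝ) + 3) / n := by
  refine ⟨1, fun n hn => ?_⟩
  have hn0 : 0 < n := by omega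
  have hnR : (0 : ℝ) < n := by exact_mod_cast hn0
  obtain ⟨c, t, _, hcard⟩ := exists_ct n _ hn0 (k n) (hk n)
  refine ⟨fun i => if colP n c t i then 1 else 0, ⟨?_, ?_⟩, ?_⟩
  · intro i _
    by_cases h : colP n c t i <;> simp [h]
  · rw [← hcard]
    congr 1
    apply Finset.filter_congr
    intro i _
    by_cases h : colP n c t i <;> simp [h]
  · have hMR : Nat.floor (L * (n : ℝ) ^ 2) < (Nat.floor (L * (n : ℝ)) + 1) * n := by
      rw [Nat.floor_lt (by positivity)]
      push_cast
      have := Nat.lt_floor_add_one (L * (n : ℝ))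
      nlinarith
    have hb := bad_card n _ _ c t hn0 hMR
    unfold energyL
    rw [one_div, inv_mul_eq_div]
    apply div_le_div_of_nonneg_right _ hnR.le
    have hsum : ∀ S : Finset (ℕ × ℕ),
        ∑ p ∈ S, ((if colP n c t p.1 then (1 : ℝ) else 0) - (if colP n c t p.2 then 1 else 0)) ^ 2
        = ((S.filter (fun p : ℕ × ℕ => ¬ (colP n c t p.1 ↔ colP n c t p.2))).card : ℝ) := by
      intro S
      rw [Finset.card_filter]
      push_cast
      apply Finset.sum_congr rfl
      intro p _
      by_cases h1 : colP n c t p.1 <;> by_cases h2 : colP n c t p.2 <;> simp [h1, h2]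
    rw [hsum]
    have hb' : ((_ : ℕ) : ℝ) ≤ ((2 * Nat.floor (L * (n : ℝ)) + 2 : ℕ) : ℝ) := Nat.cast_le.mpr hb
    push_cast at hb'
    refine le_trans (le_trans (le_of_eq ?_) hb') (by linarith)
    congr!
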